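/- arXiv:2503.08801 — 2 statements merged into one kernel-verified Lean document; each statement's English description precedes it below -/
import Mathlib

section
/- Let M ∈ ℕ. If 0 ≤ x < 1 and y ∈ ℝ satisfies erf(y) = x, then y ≥ S_M(x). If −1 < x ≤ 0 and y ∈ ℝ satisfies erf(y) = x, then y ≤ S_M(x). (Truncating the Maclaurin series of the inverse error function under-approximates it on [0,1) and over-approximates it on (−1,0].) -/
/-!
Write `F t = ∫₀ᵗ exp (-s²) ds`, so that `erf y = x` means `F y = (√π/2) x`. By oddness it suffices
to show `P_M (F t) ≤ t` for `t ≥ 0`, where `P_M` is the `M`-th partial sum of the Maclaurin series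
of `F⁻¹`. This follows by integration from the stronger bound `P_M' (F t) ≤ exp (t²)`, where
`exp (t²)` is the derivative of `F⁻¹` at `F t`; that bound is proved by induction on `M`.
Integrating it twice along `F` gives first `P_M (F t) ≤ t` and then
`2 Q_M (F t) ≤ 1 - exp (-t²)`, where `Q_M` is the primitive of `P_M` vanishing at `0`.
The recurrence for the coefficients is the power series identity `P' = 1 + 2 Q P'`, and truncating
it drops nonnegative terms, so `P_{M+1}' ≤ 1 + 2 Q_M P_M'` on `[0, ∞)`. Since
`1 + (1 - exp (-t²)) exp (t²) = exp (t²)`, the induction closes.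
-/

open Finset

/-- The error function `erf x = (2/√π) ∫₀ˣ exp (-t²) dt`. -/
noncomputable def erf (x : ℝ) : ℝ :=
  (2 / Real.sqrt Real.pi) * ∫ t in (0 : ℝ)..x, Real.exp (-t ^ 2)

/-- Maclaurin coefficients of the inverse error function. -/
noncomputable def invErfCoeff : ℕ → ℝ
  | 0 => 1
  | k + 1 => ∑ m ∈ (Finset.range (k + 1)).attach,
      invErfCoeff m.1 * invErfCoeff (k - m.1) / ((m.1 + 1) * (2 * m.1 + 1))
decreasing_by
  · have := Finset.mem_range.mp m.2; omega
  · have := Finset.mem_range.mp m.2; omega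

/-- `S M x = ∑_{k=0}^{M} (c k / (2k+1)) * ((√π/2) * x)^(2k+1)`. -/
noncomputable def invErfPartial (M : ℕ) (x : ℝ) : ℝ :=
  ∑ k ∈ Finset.range (M + 1),
    (invErfCoeff k / (2 * k + 1)) * ((Real.sqrt Real.pi / 2) * x) ^ (2 * k + 1)

lemma sum_range_cauchyProduct_le {R : Type*} [Semiring R] [PartialOrder R] [IsOrderedRing R]
    {a b : ℕ → R} (ha : ∀ k, 0 ≤ a k) (hb : ∀ k, 0 ≤ b k) (n : ℕ) :
    ∑ k ∈ range n, ∑ m ∈ range (k + 1), a m * b (k - m) ≤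
      (∑ k ∈ range n, a k) * ∑ k ∈ range n, b k := by
  rw [sum_range_diag_flip n fun m j => a m * b j, sum_mul_sum]
  refine sum_le_sum fun m _ => ?_
  exact sum_le_sum_of_subset_of_nonneg (range_mono (Nat.sub_le n m))
    fun j _ _ => mul_nonneg (ha m) (hb j)

lemma hasDerivAt_sum_div_mul_pow {ι 𝕜 : Type*} [NontriviallyNormedField 𝕜] [CharZero 𝕜]
    (s : Finset ι) (a : ι → 𝕜) (n : ι → ℕ) (u : 𝕜) :
    HasDerivAt (fun v => ∑ k ∈ s, a k / (n k + 1) * v ^ (n k + 1)) (∑ k ∈ s, a k * u ^ n k) u := by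
  refine HasDerivAt.fun_sum fun k _ => ?_
  refine ((hasDerivAt_pow (n k + 1) u).const_mul _).congr_deriv ?_
  have : (n k : 𝕜) + 1 ≠ 0 := Nat.cast_add_one_ne_zero (n k)
  rw [Nat.add_sub_cancel, Nat.cast_add_one, ← mul_assoc, div_mul_cancel₀ _ this]

lemma le_of_hasDerivAt_le {f g f' g' : ℝ → ℝ} {a : ℝ} (ha : f a ≤ g a)
    (hf : ∀ x, a ≤ x → HasDerivAt f (f' x) x) (hg : ∀ x, a ≤ x → HasDerivAt g (g' x) x)
    (h : ∀ x, a ≤ x → f' x ≤ g' x) {x : ℝ} (hx : a ≤ x) : f x ≤ g x :=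
  image_le_of_deriv_right_le_deriv_boundary
    (fun y hy => (hf y hy.1).continuousAt.continuousWithinAt)
    (fun y hy => (hf y hy.1).hasDerivWithinAt) ha
    (fun y hy => (hg y hy.1).continuousAt.continuousWithinAt)
    (fun y hy => (hg y hy.1).hasDerivWithinAt) (fun y hy => h y hy.1) ⟨hx, le_rfl⟩

lemma odd_intervalIntegral_of_even {E : Type*} [NormedAddCommGroup E] [NormedSpace ℝ E]
    {f : ℝ → E} (hf : Function.Even f) : Function.Odd fun t => ∫ s in (0 : ℝ)..t, f s := by
  intro t
  calc ∫ s in (0 : ℝ)..-t, f s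
      = ∫ s in (0 : ℝ)..-t, f (-s) := by simp only [hf _]
    _ = ∫ s in t..0, f s := by rw [intervalIntegral.integral_comp_neg, neg_neg, neg_zero]
    _ = -∫ s in (0 : ℝ)..t, f s := intervalIntegral.integral_symm 0 t

/-- The unnormalised error function `F t = ∫₀ᵗ exp (-s²) ds`. -/
noncomputable def gaussInt (t : ℝ) : ℝ := ∫ s in (0 : ℝ)..t, Real.exp (-s ^ 2)

lemma gaussInt_zero : gaussInt 0 = 0 := intervalIntegral.integral_same

lemma odd_gaussInt : Function.Odd gaussInt :=
  odd_intervalIntegral_of_even fun s => by rw [neg_sq]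

lemma hasDerivAt_gaussInt (t : ℝ) : HasDerivAt gaussInt (Real.exp (-t ^ 2)) t :=
  have hc : Continuous fun s : ℝ => Real.exp (-s ^ 2) := by fun_prop
  hc.integral_hasStrictDerivAt 0 t |>.hasDerivAt

lemma strictMono_gaussInt : StrictMono gaussInt :=
  strictMono_of_hasDerivAt_pos hasDerivAt_gaussInt fun _ => Real.exp_pos _

lemma gaussInt_nonneg_iff {t : ℝ} : 0 ≤ gaussInt t ↔ 0 ≤ t := by
  simpa only [gaussInt_zero] using strictMono_gaussInt.le_iff_le (a := 0) (b := t)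

lemma erf_eq_mul_gaussInt (y : ℝ) : erf y = 2 / Real.sqrt Real.pi * gaussInt y := rfl

lemma odd_erf : Function.Odd erf := fun y => by
  rw [erf_eq_mul_gaussInt, erf_eq_mul_gaussInt, odd_gaussInt, mul_neg]

lemma erf_nonneg_iff {y : ℝ} : 0 ≤ erf y ↔ 0 ≤ y := by
  have : 0 < 2 / Real.sqrt Real.pi := by positivity
  rw [erf_eq_mul_gaussInt, mul_nonneg_iff_of_pos_left this, gaussInt_nonneg_iff]

lemma invErfCoeff_zero : invErfCoeff 0 = 1 := by rw [invErfCoeff]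

lemma invErfCoeff_succ (k : ℕ) : invErfCoeff (k + 1) =
    ∑ m ∈ range (k + 1), invErfCoeff m * invErfCoeff (k - m) / ((m + 1) * (2 * m + 1)) := by
  rw [invErfCoeff]
  exact sum_attach (range (k + 1)) fun m : ℕ =>
    invErfCoeff m * invErfCoeff (k - m) / (((m : ℝ) + 1) * (2 * m + 1))

lemma invErfCoeff_nonneg (k : ℕ) : 0 ≤ invErfCoeff k := by
  induction k using Nat.strong_induction_on with
  | _ k ih =>
    cases k with
    | zero => exact invErfCoeff_zero ▸ zero_le_one
    | succ k =>
      rw [invErfCoeff_succ]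
      refine sum_nonneg fun m hm => ?_
      have hcm : 0 ≤ invErfCoeff m := ih m (mem_range.mp hm)
      have hckm : 0 ≤ invErfCoeff (k - m) := ih (k - m) (by omega)
      positivity

lemma odd_invErfPartial (M : ℕ) : Function.Odd (invErfPartial M) := fun x => by
  rw [invErfPartial, invErfPartial, ← sum_neg_distrib]
  refine sum_congr rfl fun k _ => ?_
  rw [mul_neg, (odd_two_mul_add_one k).neg_pow, mul_neg]

/-- The partial sum `P_M` of the Maclaurin series of the inverse of `gaussInt`; it is
`invErfPartial M` without the factor `√π/2` in the argument. -/
noncomputable def invGaussPartial (M : ℕ) (u : ℝ) : ℝ :=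
  ∑ k ∈ range (M + 1), invErfCoeff k / (2 * k + 1) * u ^ (2 * k + 1)

/-- The derivative `P_M'` of `invGaussPartial M`, written out as a polynomial. -/
noncomputable def invGaussPartialDeriv (M : ℕ) (u : ℝ) : ℝ :=
  ∑ k ∈ range (M + 1), invErfCoeff k * u ^ (2 * k)

/-- The primitive `Q_M` of `invGaussPartial M` that vanishes at `0`, written out as a
polynomial. -/
noncomputable def invGaussPartialPrimitive (M : ℕ) (u : ℝ) : ℝ :=
  ∑ k ∈ range (M + 1), invErfCoeff k / ((2 * k + 1) * (2 * k + 2)) * u ^ (2 * k + 2)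

lemma invGaussPartial_zero (M : ℕ) : invGaussPartial M 0 = 0 :=
  sum_eq_zero fun k _ => by rw [zero_pow (2 * k).succ_ne_zero, mul_zero]

lemma invGaussPartialPrimitive_zero (M : ℕ) : invGaussPartialPrimitive M 0 = 0 :=
  sum_eq_zero fun k _ => by rw [zero_pow (2 * k + 1).succ_ne_zero, mul_zero]

lemma hasDerivAt_invGaussPartial (M : ℕ) (u : ℝ) :
    HasDerivAt (invGaussPartial M) (invGaussPartialDeriv M u) u := by
  have h := hasDerivAt_sum_div_mul_pow (range (M + 1)) invErfCoeff (fun k => 2 * k) u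
  push_cast at h
  exact h

lemma hasDerivAt_invGaussPartialPrimitive (M : ℕ) (u : ℝ) :
    HasDerivAt (invGaussPartialPrimitive M) (invGaussPartial M u) u := by
  have h := hasDerivAt_sum_div_mul_pow (range (M + 1))
    (fun k => invErfCoeff k / (2 * k + 1)) (fun k => 2 * k + 1) u
  push_cast at h
  simp only [div_div, add_assoc, one_add_one_eq_two] at h
  exact h

lemma invGaussPartialDeriv_nonneg (M : ℕ) {u : ℝ} (hu : 0 ≤ u) : 0 ≤ invGaussPartialDeriv M u :=
  sum_nonneg fun k _ => mul_nonneg (invErfCoeff_nonneg k) (pow_nonneg hu _)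

lemma invErfCoeff_succ_mul_pow (k : ℕ) (u : ℝ) :
    invErfCoeff (k + 1) * u ^ (2 * (k + 1)) = ∑ m ∈ range (k + 1),
      2 * (invErfCoeff m / ((2 * m + 1) * (2 * m + 2)) * u ^ (2 * m + 2)) *
        (invErfCoeff (k - m) * u ^ (2 * (k - m))) := by
  rw [invErfCoeff_succ, sum_mul]
  refine sum_congr rfl fun m hm => ?_
  obtain ⟨j, rfl⟩ := Nat.exists_eq_add_of_le (mem_range_succ_iff.mp hm)
  rw [Nat.add_sub_cancel_left]
  field_simp
  ring

lemma invGaussPartialDeriv_succ_le (M : ℕ) {u : ℝ} (hu : 0 ≤ u) :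
    invGaussPartialDeriv (M + 1) u ≤
      1 + 2 * invGaussPartialPrimitive M u * invGaussPartialDeriv M u := by
  rw [invGaussPartialDeriv, sum_range_succ', invErfCoeff_zero, mul_zero, pow_zero, mul_one,
    add_comm, invGaussPartialPrimitive, mul_sum, invGaussPartialDeriv]
  simp only [invErfCoeff_succ_mul_pow]
  gcongr
  refine sum_range_cauchyProduct_le
    (a := fun m : ℕ => 2 * (invErfCoeff m / ((2 * m + 1) * (2 * m + 2)) * u ^ (2 * m + 2)))
    (b := fun j => invErfCoeff j * u ^ (2 * j)) (fun m => ?_) (fun j => ?_) (M + 1)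
  · have := invErfCoeff_nonneg m
    positivity
  · exact mul_nonneg (invErfCoeff_nonneg j) (pow_nonneg hu _)

lemma invGaussPartial_gaussInt_le_of_deriv_le {M : ℕ}
    (h : ∀ t, 0 ≤ t → invGaussPartialDeriv M (gaussInt t) ≤ Real.exp (t ^ 2)) {t : ℝ}
    (ht : 0 ≤ t) : invGaussPartial M (gaussInt t) ≤ t := by
  refine le_of_hasDerivAt_le (f := fun s => invGaussPartial M (gaussInt s)) (g := id) ?_
    (fun s _ => (hasDerivAt_invGaussPartial M _).comp s (hasDerivAt_gaussInt s))
    (fun s _ => hasDerivAt_id s) (fun s hs => ?_) ht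
  · exact (congrArg _ gaussInt_zero).trans (invGaussPartial_zero M) |>.le
  · rw [Real.exp_neg, ← div_eq_mul_inv]
    exact div_le_one_of_le₀ (h s hs) (Real.exp_pos _).le

lemma two_mul_invGaussPartialPrimitive_gaussInt_le {M : ℕ}
    (h : ∀ t, 0 ≤ t → invGaussPartial M (gaussInt t) ≤ t) {t : ℝ} (ht : 0 ≤ t) :
    2 * invGaussPartialPrimitive M (gaussInt t) ≤ 1 - Real.exp (-t ^ 2) := by
  have hderiv (s : ℝ) :
      HasDerivAt (fun r => 1 - Real.exp (-r ^ 2)) (2 * (s * Real.exp (-s ^ 2))) s := by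
    refine ((hasDerivAt_pow 2 s).fun_neg.exp.const_sub 1).congr_deriv ?_
    push_cast
    ring
  refine le_of_hasDerivAt_le (f := fun s => 2 * invGaussPartialPrimitive M (gaussInt s))
    (g := fun s => 1 - Real.exp (-s ^ 2)) ?_
    (fun s _ => ((hasDerivAt_invGaussPartialPrimitive M _).comp s
      (hasDerivAt_gaussInt s)).const_mul 2)
    (fun s _ => hderiv s) (fun s hs => ?_) ht
  · simp [gaussInt_zero, invGaussPartialPrimitive_zero]
  · gcongr
    exact h s hs

lemma invGaussPartialDeriv_gaussInt_le (M : ℕ) {t : ℝ} (ht : 0 ≤ t) :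
    invGaussPartialDeriv M (gaussInt t) ≤ Real.exp (t ^ 2) := by
  induction M generalizing t with
  | zero => simpa [invGaussPartialDeriv, invErfCoeff_zero] using sq_nonneg t
  | succ M ih =>
    have hF : 0 ≤ gaussInt t := gaussInt_nonneg_iff.mpr ht
    have hP (s : ℝ) (hs : 0 ≤ s) : invGaussPartial M (gaussInt s) ≤ s :=
      invGaussPartial_gaussInt_le_of_deriv_le (fun _ => ih) hs
    have hQ : 2 * invGaussPartialPrimitive M (gaussInt t) ≤ 1 - Real.exp (-t ^ 2) :=
      two_mul_invGaussPartialPrimitive_gaussInt_le hP ht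
    have hexp : 0 ≤ 1 - Real.exp (-t ^ 2) :=
      sub_nonneg.mpr (Real.exp_le_one_iff.mpr (neg_nonpos.mpr (sq_nonneg t)))
    calc invGaussPartialDeriv (M + 1) (gaussInt t)
        ≤ 1 + 2 * invGaussPartialPrimitive M (gaussInt t) * invGaussPartialDeriv M (gaussInt t) :=
          invGaussPartialDeriv_succ_le M hF
      _ ≤ 1 + (1 - Real.exp (-t ^ 2)) * Real.exp (t ^ 2) := by
          gcongr
          · exact invGaussPartialDeriv_nonneg M hF
          · exact ih ht
      _ = Real.exp (t ^ 2) := by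
          rw [sub_mul, ← Real.exp_add, neg_add_cancel, Real.exp_zero]
          ring

lemma invErfPartial_erf (M : ℕ) (y : ℝ) :
    invErfPartial M (erf y) = invGaussPartial M (gaussInt y) := by
  have h : Real.sqrt Real.pi / 2 * erf y = gaussInt y := by
    have : Real.sqrt Real.pi ≠ 0 := by positivity
    rw [erf_eq_mul_gaussInt]
    field_simp
  rw [invErfPartial, h, invGaussPartial]

lemma invErfPartial_erf_le (M : ℕ) {y : ℝ} (hy : 0 ≤ y) : invErfPartial M (erf y) ≤ y :=
  invErfPartial_erf M y ▸
    invGaussPartial_gaussInt_le_of_deriv_le (fun _ => invGaussPartialDeriv_gaussInt_le M) hy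

/-- Truncating the Maclaurin series of the inverse error function under-approximates it
on `[0,1)` and over-approximates it on `(-1,0]`. -/
theorem invErfPartial_le_invErf (M : ℕ) (x y : ℝ) :
    (0 ≤ x → x < 1 → erf y = x → invErfPartial M x ≤ y) ∧
    (-1 < x → x ≤ 0 → erf y = x → y ≤ invErfPartial M x) := by
  constructor
  · rintro hx - rfl
    exact invErfPartial_erf_le M (erf_nonneg_iff.mp hx)
  · rintro - hx rfl
    have hy : 0 ≤ -y := erf_nonneg_iff.mp (by rwa [odd_erf, neg_nonneg])
    have h : invErfPartial M (erf (-y)) ≤ -y := invErfPartial_erf_le M hy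
    rwa [odd_erf, odd_invErfPartial, neg_le_neg_iff] at h
end

section
/- (Certified radius of the smoothed classifier.) Let σ > 0, d ≥ 1, and let f_A, f_B : ℝ^d → [0,1] be measurable with f_A + f_B ≤ 1 pointwise. Let ĥ_A and ĥ_B be their Gaussian smoothings, and fix x ∈ ℝ^d. Suppose u_A, u_B ∈ ℝ satisfy Φ(u_A) = ĥ_A(x), Φ(u_B) = ĥ_B(x), and u_A > u_B. Then for every perturbation τ ∈ ℝ^d with ‖τ‖ < (σ/2)·(u_A − u_B), one has ĥ_A(x+τ) > ĥ_B(x+τ). (That is, the smoothed classifier's prediction of class A over class B is certified within the radius R₂ = (σ/2)·(Φ⁻¹(ĥ_A(x)) − Φ⁻¹(ĥ_B(x))).) -/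
/-!
The argument is that of Neyman and Pearson. The likelihood ratio of `N(x + τ, σ² I)` to `N(x, σ² I)`
at `z` increases with `⟪τ, z⟫`. Hence, among the functions `f` with values in `[0, 1]` whose mean
under `N(x, σ² I)` is at least `Φ(u)`, the mean under `N(x + τ, σ² I)` is smallest for the indicator
of the half-space `⟪τ, z - x⟫ ≤ σ ‖τ‖ u`, where it equals `Φ(u - ‖τ‖ / σ)`.

If `ĥ_A(x + τ) ≤ ĥ_B(x + τ)`, this bound for `f_A` from `x` to `x + τ` gives
`Φ(u_A - ‖τ‖ / σ) ≤ ĥ_B(x + τ)`, and the bound for `f_B` from `x + τ` back to `x` gives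
`Φ(u_A - 2 ‖τ‖ / σ) ≤ ĥ_B(x) = Φ(u_B)`. As `Φ` is strictly increasing, `u_A - u_B ≤ 2 ‖τ‖ / σ`.
Moving `f_B` back to `x` avoids a separate upper bound for `ĥ_B(x + τ)`.
-/

open MeasureTheory

/-- The standard normal cumulative distribution function. -/
noncomputable def stdNormalCDF (y : ℝ) : ℝ :=
  ∫ t in Set.Iic y, (1 / Real.sqrt (2 * Real.pi)) * Real.exp (-t ^ 2 / 2)

section NormalCDF

open ProbabilityTheory

lemma strictMono_cdf (μ : Measure ℝ) [IsProbabilityMeasure μ] [μ.IsOpenPosMeasure] :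
    StrictMono (cdf μ) := by
  intro a b hab
  rw [← sub_pos, ← ENNReal.ofReal_pos, ← StieltjesFunction.measure_Ioc, measure_cdf]
  exact (Measure.measure_Ioo_pos μ |>.2 hab).trans_le (measure_mono Set.Ioo_subset_Ioc_self)

lemma stdNormalCDF_eq_cdf : stdNormalCDF = cdf (gaussianReal 0 1) := by
  ext u
  rw [cdf_eq_real, measureReal_def, gaussianReal_apply_eq_integral _ one_ne_zero,
    ENNReal.toReal_ofReal (integral_nonneg fun t => gaussianPDFReal_nonneg 0 1 t)]
  simp [stdNormalCDF, gaussianPDFReal]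

lemma strictMono_stdNormalCDF : StrictMono stdNormalCDF := by
  have : (gaussianReal 0 1).IsOpenPosMeasure :=
    (gaussianReal_absolutelyContinuous' 0 one_ne_zero).isOpenPosMeasure
  exact stdNormalCDF_eq_cdf ▸ strictMono_cdf (gaussianReal 0 1)

end NormalCDF

section NeymanPearson

variable {α : Type*} [MeasurableSpace α] {μ : Measure α} {f p q : α → ℝ} {S : Set α} {c : ℝ}

lemma integrable_mul_of_ae_mem_Icc (hp : Integrable p μ) (hf : AEMeasurable f μ)
    (hf01 : ∀ᵐ z ∂μ, f z ∈ Set.Icc 0 1) : Integrable (fun z => f z * p z) μ := by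
  refine hp.bdd_mul (c := 1) hf.aestronglyMeasurable ?_
  filter_upwards [hf01] with z hz
  exact (Real.norm_of_nonneg hz.1).trans_le hz.2

/-- The Neyman–Pearson lemma for the likelihood-ratio test `S` with threshold `c`. -/
lemma setIntegral_le_integral_mul_of_likelihoodRatio (hp : Integrable p μ) (hq : Integrable q μ)
    (hf : AEMeasurable f μ) (hf01 : ∀ᵐ z ∂μ, f z ∈ Set.Icc 0 1) (hS : MeasurableSet S)
    (hc : 0 ≤ c) (hqS : ∀ z ∈ S, q z ≤ c * p z) (hqSc : ∀ z ∉ S, c * p z ≤ q z)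
    (hSf : ∫ z in S, p z ∂μ ≤ ∫ z, f z * p z ∂μ) :
    ∫ z in S, q z ∂μ ≤ ∫ z, f z * q z ∂μ := by
  have hqp : Integrable (fun z => q z - c * p z) μ := hq.sub (hp.const_mul c)
  have hpointwise : ∀ᵐ z ∂μ, S.indicator (fun z => q z - c * p z) z ≤ f z * (q z - c * p z) := by
    filter_upwards [hf01] with z ⟨hf0, hf1⟩
    by_cases hz : z ∈ S
    · rw [Set.indicator_of_mem hz]
      exact le_mul_of_le_one_left (sub_nonpos.2 (hqS z hz)) hf1
    · rw [Set.indicator_of_notMem hz]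
      exact mul_nonneg hf0 (sub_nonneg.2 (hqSc z hz))
  have hmain : ∫ z in S, q z ∂μ - c * ∫ z in S, p z ∂μ ≤
      ∫ z, f z * q z ∂μ - c * ∫ z, f z * p z ∂μ := by
    calc ∫ z in S, q z ∂μ - c * ∫ z in S, p z ∂μ
        = ∫ z, S.indicator (fun z => q z - c * p z) z ∂μ := by
          rw [integral_indicator hS, integral_sub hq.integrableOn (hp.const_mul c).integrableOn,
            integral_const_mul]
      _ ≤ ∫ z, f z * (q z - c * p z) ∂μ :=
          integral_mono_ae (hqp.indicator hS) (integrable_mul_of_ae_mem_Icc hqp hf hf01) hpointwise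
      _ = ∫ z, f z * q z ∂μ - c * ∫ z, f z * p z ∂μ := by
          simp only [mul_sub, mul_left_comm _ c]
          rw [integral_sub (integrable_mul_of_ae_mem_Icc hq hf hf01)
            ((integrable_mul_of_ae_mem_Icc hp hf hf01).const_mul c), integral_const_mul]
  linarith [mul_le_mul_of_nonneg_left hSf hc]

end NeymanPearson

section Gaussian

open ProbabilityTheory Module
open scoped RealInnerProductSpace

variable {E : Type*} [NormedAddCommGroup E] [InnerProductSpace ℝ E] {σ : ℝ}

/-- The Lebesgue density at `z` of the isotropic Gaussian law `N(x, σ² I)`. The parameter `σ` is the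
standard deviation, unlike the variance of `gaussianPDFReal`. -/
noncomputable def isotropicGaussianPDF (σ : ℝ) (x z : E) : ℝ :=
  (2 * Real.pi * σ ^ 2) ^ (-(finrank ℝ E : ℝ) / 2) * Real.exp (-‖x - z‖ ^ 2 / (2 * σ ^ 2))

lemma isotropicGaussianPDF_nonneg (σ : ℝ) (x z : E) : 0 ≤ isotropicGaussianPDF σ x z := by
  unfold isotropicGaussianPDF; positivity

lemma isotropicGaussianPDF_add (hσ : σ ≠ 0) (x τ z : E) :
    isotropicGaussianPDF σ (x + τ) z =
      Real.exp ((⟪τ, z - x⟫ - ‖τ‖ ^ 2 / 2) / σ ^ 2) * isotropicGaussianPDF σ x z := by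
  have hsq : ‖x + τ - z‖ ^ 2 = ‖x - z‖ ^ 2 - 2 * ⟪τ, z - x⟫ + ‖τ‖ ^ 2 := by
    rw [show x + τ - z = τ - (z - x) by abel, norm_sub_sq_real, norm_sub_rev x z]
    ring
  rw [isotropicGaussianPDF, isotropicGaussianPDF, hsq, mul_left_comm, ← Real.exp_add]
  congr 2
  field_simp
  ring

/-- The half-space of points whose coordinate along `τ`, measured from `x` in units of `σ`, is at
most `u`. Its indicator is the extremal test in the Neyman–Pearson comparison of `N(x, σ² I)` and
`N(x + τ, σ² I)`. Multiplying by `‖τ‖` avoids normalising `τ`. -/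
def gaussianHalfSpace (σ : ℝ) (x τ : E) (u : ℝ) : Set E :=
  {z | ⟪τ, z - x⟫ ≤ σ * ‖τ‖ * u}

lemma gaussianHalfSpace_add (hσ : σ ≠ 0) (x τ : E) (u : ℝ) :
    gaussianHalfSpace σ (x + τ) τ (u - ‖τ‖ / σ) = gaussianHalfSpace σ x τ u := by
  ext z
  have hbound : σ * ‖τ‖ * (u - ‖τ‖ / σ) = σ * ‖τ‖ * u - ‖τ‖ ^ 2 := by field_simp
  simp only [gaussianHalfSpace, Set.mem_ofPred_eq, ← sub_sub, inner_sub_right _ (z - x),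
    real_inner_self_eq_norm_sq, hbound, sub_le_sub_iff_right]

variable [MeasurableSpace E] [BorelSpace E]

lemma measurable_isotropicGaussianPDF (σ : ℝ) (x : E) :
    Measurable (isotropicGaussianPDF σ x) := by
  unfold isotropicGaussianPDF; fun_prop

lemma measurableSet_gaussianHalfSpace (σ : ℝ) (x τ : E) (u : ℝ) :
    MeasurableSet (gaussianHalfSpace σ x τ u) :=
  measurableSet_le (by fun_prop) measurable_const

variable [FiniteDimensional ℝ E]

lemma integrable_isotropicGaussianPDF (hσ : σ ≠ 0) (x : E) :
    Integrable (isotropicGaussianPDF σ x) := by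
  have hexp : Integrable fun v : E => Real.exp (-(1 / (2 * σ ^ 2)) * ‖v‖ ^ 2) := by
    apply Integrable.of_integral_ne_zero
    rw [GaussianFourier.integral_rexp_neg_mul_sq_norm (by positivity)]
    positivity
  convert! (hexp.comp_sub_left x).const_mul ((2 * Real.pi * σ ^ 2) ^ (-(finrank ℝ E : ℝ) / 2))
    using 2 with z
  rw [isotropicGaussianPDF]
  ring_nf

/-- The isotropic Gaussian law `N(x, σ² I)`, as the measure with density
`isotropicGaussianPDF σ x`. For `σ = 0` and `E` of positive dimension this is the zero measure, not
the Dirac mass at `x`. -/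
noncomputable def isotropicGaussian (σ : ℝ) (x : E) : Measure E :=
  volume.withDensity fun z => ENNReal.ofReal (isotropicGaussianPDF σ x z)

lemma isFiniteMeasure_isotropicGaussian (hσ : σ ≠ 0) (x : E) :
    IsFiniteMeasure (isotropicGaussian σ x) :=
  isFiniteMeasure_withDensity_ofReal (integrable_isotropicGaussianPDF hσ x).2

lemma integral_isotropicGaussian {F : Type*} [NormedAddCommGroup F] [NormedSpace ℝ F]
    (σ : ℝ) (x : E) (g : E → F) :
    ∫ z, g z ∂isotropicGaussian σ x = ∫ z, isotropicGaussianPDF σ x z • g z := by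
  rw [isotropicGaussian, integral_withDensity_eq_integral_toReal_smul
    (measurable_isotropicGaussianPDF σ x).ennreal_ofReal (by simp)]
  simp only [ENNReal.toReal_ofReal (isotropicGaussianPDF_nonneg σ x _)]

lemma isotropicGaussian_real_apply (σ : ℝ) (x : E) {S : Set E} (hS : MeasurableSet S) :
    (isotropicGaussian σ x).real S = ∫ z in S, isotropicGaussianPDF σ x z := by
  rw [← integral_indicator_one hS, integral_isotropicGaussian, ← integral_indicator hS]
  congr with z
  by_cases hz : z ∈ S <;> simp [hz]

lemma charFun_isotropicGaussian (hσ : σ ≠ 0) (x t : E) :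
    charFun (isotropicGaussian σ x) t =
      Complex.exp (⟪x, t⟫ * Complex.I - σ ^ 2 * ‖t‖ ^ 2 / 2) := by
  set C : ℝ := (2 * Real.pi * σ ^ 2) ^ (-(finrank ℝ E : ℝ) / 2) with hC
  set b : ℝ := 1 / (2 * σ ^ 2) with hb
  have hb_re : 0 < (b : ℂ).re := by
    rw [hb, Complex.ofReal_re]; positivity
  have hintegrand (v : E) :
      isotropicGaussianPDF σ x (v + x) • Complex.exp (⟪v + x, t⟫ * Complex.I) =
        C * Complex.exp (⟪x, t⟫ * Complex.I) *
          Complex.exp (-b * ‖v‖ ^ 2 + Complex.I * ⟪t, v⟫) := by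
    rw [isotropicGaussianPDF, ← hC, sub_add_cancel_right, norm_neg, Complex.real_smul,
      inner_add_left, real_inner_comm t v, hb]
    push_cast
    rw [mul_assoc, mul_assoc, ← Complex.exp_add, ← Complex.exp_add]
    ring_nf
  have hnorm : (C : ℂ) * (Real.pi / b) ^ (finrank ℝ E / 2 : ℂ) = 1 := by
    have hdiv : Real.pi / b = 2 * Real.pi * σ ^ 2 := by rw [hb]; field_simp
    have hexponent : (finrank ℝ E / 2 : ℂ) = ((finrank ℝ E / 2 : ℝ) : ℂ) := by push_cast; rfl
    rw [hexponent, ← Complex.ofReal_div, ← Complex.ofReal_cpow (by positivity),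
      ← Complex.ofReal_mul, hdiv, hC, ← Real.rpow_add (by positivity), neg_div, neg_add_cancel,
      Real.rpow_zero, Complex.ofReal_one]
  rw [charFun_apply, integral_isotropicGaussian, ← integral_add_right_eq_self _ x]
  simp_rw [hintegrand]
  rw [integral_const_mul, GaussianFourier.integral_cexp_neg_mul_sq_norm_add hb_re,
    mul_mul_mul_comm, hnorm, one_mul, ← Complex.exp_add, Complex.I_sq, hb]
  congr 1
  push_cast
  field_simp
  ring

lemma isotropicGaussian_eq_map_stdGaussian (hσ : σ ≠ 0) (x : E) :
    isotropicGaussian σ x = (stdGaussian E).map fun v => x + σ • v := by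
  have := isFiniteMeasure_isotropicGaussian hσ x
  have hmap : (stdGaussian E).map (fun v => x + σ • v) =
      ((stdGaussian E).map (σ • ·)).map (x + ·) :=
    (Measure.map_map (by fun_prop) (by fun_prop)).symm
  refine Measure.ext_of_charFun (funext fun t => ?_)
  have hsq : ‖σ • t‖ ^ 2 = σ ^ 2 * ‖t‖ ^ 2 := by
    rw [norm_smul, mul_pow, Real.norm_eq_abs, sq_abs]
  rw [hmap, charFun_isotropicGaussian hσ, charFun_map_const_add, charFun_map_smul,
    charFun_stdGaussian, ← Complex.exp_add, ← Complex.ofReal_pow ‖σ • t‖, hsq]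
  congr 1
  push_cast
  ring

lemma stdGaussian_map_strongDual (L : StrongDual ℝ E) :
    (stdGaussian E).map L = gaussianReal 0 (‖L‖₊ ^ 2) := by
  rw [IsGaussian.map_eq_gaussianReal, integral_strongDual_stdGaussian, variance_dual_stdGaussian]
  congr
  exact NNReal.eq (by simp)

lemma setIntegral_gaussianHalfSpace (hσ : 0 < σ) (x : E) {τ : E} (hτ : τ ≠ 0) (u : ℝ) :
    ∫ z in gaussianHalfSpace σ x τ u, isotropicGaussianPDF σ x z = stdNormalCDF u := by
  have hτ_pos : 0 < ‖τ‖ := norm_pos_iff.2 hτ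
  have hpreimage : (fun v => x + σ • v) ⁻¹' gaussianHalfSpace σ x τ u =
      innerSL ℝ (‖τ‖⁻¹ • τ) ⁻¹' Set.Iic u := by
    ext v
    simp only [gaussianHalfSpace, Set.mem_preimage, Set.mem_ofPred_eq, Set.mem_Iic,
      add_sub_cancel_left, innerSL_apply_apply, real_inner_smul_left, real_inner_smul_right,
      mul_assoc, mul_le_mul_iff_right₀ hσ, inv_mul_le_iff₀ hτ_pos]
  have hnorm : ‖innerSL ℝ (‖τ‖⁻¹ • τ)‖₊ = 1 :=
    NNReal.eq ((innerSL_apply_norm ℝ _).trans (norm_smul_inv_norm hτ))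
  have hH := measurableSet_gaussianHalfSpace σ x τ u
  rw [← isotropicGaussian_real_apply σ x hH, isotropicGaussian_eq_map_stdGaussian hσ.ne',
    map_measureReal_apply (by fun_prop) hH, hpreimage,
    ← map_measureReal_apply (by fun_prop) measurableSet_Iic, stdGaussian_map_strongDual, hnorm,
    one_pow, stdNormalCDF_eq_cdf, cdf_eq_real]

/-- The Gaussian smoothing `ĥ(x)` of `f`, the expectation of `f (x + ε)` for `ε ~ N(0, σ² I)`.
For `σ = 0` and `E` of positive dimension it is `0`, not `f x`. -/
noncomputable def gaussianSmoothing (σ : ℝ) (f : E → ℝ) (x : E) : ℝ :=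
  ∫ z, f z * isotropicGaussianPDF σ x z

lemma stdNormalCDF_sub_le_gaussianSmoothing_add (hσ : 0 < σ) {f : E → ℝ} (hf : AEMeasurable f)
    (hf01 : ∀ᵐ z, f z ∈ Set.Icc 0 1) {x : E} {u : ℝ}
    (hu : stdNormalCDF u ≤ gaussianSmoothing σ f x) (τ : E) :
    stdNormalCDF (u - ‖τ‖ / σ) ≤ gaussianSmoothing σ f (x + τ) := by
  rcases eq_or_ne τ 0 with rfl | hτ
  · simpa using hu
  set H := gaussianHalfSpace σ x τ u
  -- The value of the likelihood ratio on the boundary of the half-space.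
  set c := Real.exp ((σ * ‖τ‖ * u - ‖τ‖ ^ 2 / 2) / σ ^ 2) with hc
  have hle_of_mem : ∀ z ∈ H, isotropicGaussianPDF σ (x + τ) z ≤ c * isotropicGaussianPDF σ x z := by
    intro z (hz : ⟪τ, z - x⟫ ≤ σ * ‖τ‖ * u)
    rw [isotropicGaussianPDF_add hσ.ne', hc]
    gcongr
    exact isotropicGaussianPDF_nonneg σ x z
  have hge_of_notMem :
      ∀ z ∉ H, c * isotropicGaussianPDF σ x z ≤ isotropicGaussianPDF σ (x + τ) z := by
    intro z hz
    have hz' : σ * ‖τ‖ * u ≤ ⟪τ, z - x⟫ := (not_le.1 hz).le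
    rw [isotropicGaussianPDF_add hσ.ne', hc]
    gcongr
    exact isotropicGaussianPDF_nonneg σ x z
  have hmass : ∫ z in H, isotropicGaussianPDF σ x z ≤ gaussianSmoothing σ f x :=
    (setIntegral_gaussianHalfSpace hσ x hτ u).trans_le hu
  calc stdNormalCDF (u - ‖τ‖ / σ)
      = ∫ z in H, isotropicGaussianPDF σ (x + τ) z := by
        rw [← setIntegral_gaussianHalfSpace hσ (x + τ) hτ, gaussianHalfSpace_add hσ.ne']
    _ ≤ gaussianSmoothing σ f (x + τ) :=
        setIntegral_le_integral_mul_of_likelihoodRatio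
          (integrable_isotropicGaussianPDF hσ.ne' x)
          (integrable_isotropicGaussianPDF hσ.ne' (x + τ)) hf hf01
          (measurableSet_gaussianHalfSpace σ x τ u) (Real.exp_nonneg _) hle_of_mem
          hge_of_notMem hmass

theorem smoothed_certified_radius_general (hσ : 0 < σ) {fA fB : E → ℝ}
    (hfA : AEMeasurable fA) (hfB : AEMeasurable fB)
    (hfA01 : ∀ᵐ z, fA z ∈ Set.Icc 0 1) (hfB01 : ∀ᵐ z, fB z ∈ Set.Icc 0 1)
    {x : E} {uA uB : ℝ} (huA : stdNormalCDF uA ≤ gaussianSmoothing σ fA x)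
    (huB : gaussianSmoothing σ fB x ≤ stdNormalCDF uB)
    {τ : E} (hτ : ‖τ‖ < σ / 2 * (uA - uB)) :
    gaussianSmoothing σ fB (x + τ) < gaussianSmoothing σ fA (x + τ) := by
  by_contra! hAB
  have hB_shifted : stdNormalCDF (uA - ‖τ‖ / σ) ≤ gaussianSmoothing σ fB (x + τ) :=
    (stdNormalCDF_sub_le_gaussianSmoothing_add hσ hfA hfA01 huA τ).trans hAB
  have hB_back : stdNormalCDF (uA - ‖τ‖ / σ - ‖τ‖ / σ) ≤ gaussianSmoothing σ fB x := by
    simpa using stdNormalCDF_sub_le_gaussianSmoothing_add hσ hfB hfB01 hB_shifted (-τ)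
  have hu : uA - ‖τ‖ / σ - ‖τ‖ / σ ≤ uB :=
    strictMono_stdNormalCDF.le_iff_le.1 (hB_back.trans huB)
  have hτ' : ‖τ‖ / σ < (uA - uB) / 2 := by
    rw [div_lt_iff₀ hσ]; linarith
  linarith

end Gaussian

lemma gaussianSmoothing_euclideanSpace {d : ℕ} (σ : ℝ) (f : EuclideanSpace ℝ (Fin d) → ℝ)
    (x : EuclideanSpace ℝ (Fin d)) :
    gaussianSmoothing σ f x = ∫ z, f z *
      ((2 * Real.pi * σ ^ 2) ^ (-(d : ℝ) / 2) * Real.exp (-‖x - z‖ ^ 2 / (2 * σ ^ 2))) := by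
  simp only [gaussianSmoothing, isotropicGaussianPDF, finrank_euclideanSpace_fin]

/-- Certified radius of the smoothed classifier: if `ĥ_A(x) = Φ(u_A)`,
`ĥ_B(x) = Φ(u_B)` with `u_A > u_B`, then class `A` dominates class `B` under the
smoothed classifier for all perturbations of norm `< (σ/2)(u_A - u_B)`. -/
theorem smoothed_certified_radius (d : ℕ) (hd : 1 ≤ d) (σ : ℝ) (hσ : 0 < σ)
    (fA fB : EuclideanSpace ℝ (Fin d) → ℝ)
    (hfA : Measurable fA) (hfB : Measurable fB)
    (hfA0 : ∀ z, 0 ≤ fA z) (hfB0 : ∀ z, 0 ≤ fB z)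
    (hAB : ∀ z, fA z + fB z ≤ 1)
    (hA hB : EuclideanSpace ℝ (Fin d) → ℝ)
    (hhA : ∀ x, hA x = ∫ z, fA z *
      ((2 * Real.pi * σ ^ 2) ^ (-(d : ℝ) / 2) * Real.exp (-‖x - z‖ ^ 2 / (2 * σ ^ 2))))
    (hhB : ∀ x, hB x = ∫ z, fB z *
      ((2 * Real.pi * σ ^ 2) ^ (-(d : ℝ) / 2) * Real.exp (-‖x - z‖ ^ 2 / (2 * σ ^ 2))))
    (x : EuclideanSpace ℝ (Fin d)) (uA uB : ℝ)
    (huA : stdNormalCDF uA = hA x) (huB : stdNormalCDF uB = hB x)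
    (huAB : uB < uA)
    (τ : EuclideanSpace ℝ (Fin d)) (hτ : ‖τ‖ < σ / 2 * (uA - uB)) :
    hB (x + τ) < hA (x + τ) := by
  simp only [hhA, hhB, ← gaussianSmoothing_euclideanSpace] at huA huB ⊢
  exact smoothed_certified_radius_general hσ hfA.aemeasurable hfB.aemeasurable
    (.of_forall fun z => ⟨hfA0 z, by linarith [hAB z, hfB0 z]⟩)
    (.of_forall fun z => ⟨hfB0 z, by linarith [hAB z, hfA0 z]⟩) huA.le huB.ge hτ
end
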